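/- With the notation of the concrete construction (Ω = ZMod 8 × ZMod k × ZMod r with k odd and r ∈ {1,3}, and G = ⟨R₁,R₂⟩ ≤ Sym(Ω)): G is 2-closed, i.e., every permutation z of Ω such that for every ordered pair (a,b) ∈ Ω × Ω there exists g ∈ G with z(a) = g(a) and z(b) = g(b), belongs to G. -/

import Mathlib

open Equiv

instance : DecidablePred (Even : ZMod 8 → Prop) := fun i =>
  decidable_of_iff (∃ x : ZMod 8, i = x + x) Iff.rfl

/-- The permutation of `ZMod 8` given by the 8-cycle (0 1 2 3 4 5 6 7). -/
def sigma1 : Equiv.Perm (ZMod 8) := Equiv.addRight (1 : ZMod 8)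

/-- The permutation of `ZMod 8` given by the 8-cycle (0 1 6 7 4 5 2 3). -/
def sigma2 : Equiv.Perm (ZMod 8) where
  toFun i := if Even i then i + 1 else i + 5
  invFun i := if Even i then i + 3 else i - 1
  left_inv := by decide
  right_inv := by decide

def tau1 (k r : ℕ) : Equiv.Perm (ZMod 8 × ZMod k × ZMod r) :=
  sigma1.prodCongr (Equiv.refl _)

def tau2 (k r : ℕ) : Equiv.Perm (ZMod 8 × ZMod k × ZMod r) :=
  sigma2.prodCongr (Equiv.refl _)

def rho1 (k r : ℕ) : Equiv.Perm (ZMod 8 × ZMod k × ZMod r) where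
  toFun x := if Even x.1 then (x.1, x.2.1 + 1, x.2.2) else (x.1, x.2.1 - 1, x.2.2)
  invFun x := if Even x.1 then (x.1, x.2.1 - 1, x.2.2) else (x.1, x.2.1 + 1, x.2.2)
  left_inv := by rintro ⟨i, j, l⟩; by_cases h : Even i <;> simp [h]
  right_inv := by rintro ⟨i, j, l⟩; by_cases h : Even i <;> simp [h]

def rho2 (k r : ℕ) : Equiv.Perm (ZMod 8 × ZMod k × ZMod r) where
  toFun x := if Even x.1 then (x.1, x.2.1, x.2.2 + 1) else (x.1, x.2.1, x.2.2 - 1)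
  invFun x := if Even x.1 then (x.1, x.2.1, x.2.2 - 1) else (x.1, x.2.1, x.2.2 + 1)
  left_inv := by rintro ⟨i, j, l⟩; by_cases h : Even i <;> simp [h]
  right_inv := by rintro ⟨i, j, l⟩; by_cases h : Even i <;> simp [h]

/-- The permutation of `ZMod 8 × ZMod k × ZMod r` acting on the first coordinate as the
product of transpositions (1 5)(3 7) and fixing the other coordinates. -/
def hperm (k r : ℕ) : Equiv.Perm (ZMod 8 × ZMod k × ZMod r) :=
  ((Equiv.swap (1 : ZMod 8) 5).trans (Equiv.swap (3 : ZMod 8) 7)).prodCongr (Equiv.refl _)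

def R1 (k r : ℕ) : Subgroup (Equiv.Perm (ZMod 8 × ZMod k × ZMod r)) :=
  Subgroup.closure {tau1 k r, rho1 k r, rho2 k r}

def R2 (k r : ℕ) : Subgroup (Equiv.Perm (ZMod 8 × ZMod k × ZMod r)) :=
  Subgroup.closure {tau2 k r, rho1 k r, rho2 k r}

def Ggrp (k r : ℕ) : Subgroup (Equiv.Perm (ZMod 8 × ZMod k × ZMod r)) :=
  R1 k r ⊔ R2 k r

def Hgrp (k r : ℕ) : Subgroup (Equiv.Perm (ZMod 8 × ZMod k × ZMod r)) :=
  Subgroup.closure {tau1 k r, tau2 k r}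

/-!
The permutations preserving a fixed function of two points always form a 2-closed group, so it
suffices to exhibit `G` as such a group. When the first coordinates of `x` and `y` have the same
parity, the generators of `G` preserve `y - x`. When the parities differ, `ρ₁` and `ρ₂` move the
remaining coordinates of `x` and `y` in opposite directions, so their sum is preserved, while `τ₂`
changes the difference of the first coordinates by `0` or `4`, so twice that difference is
preserved. A permutation which fixes the origin and respects these data is trivial or equal to
`τ₁⁻¹ τ₂`; as `G` is transitive, it contains every permutation respecting them.
-/

section TwoClosed

variable {α β : Type*}

/-- A permutation group is 2-closed if it contains every permutation that agrees with some element
of the group on each ordered pair of points. -/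
def IsTwoClosed (G : Subgroup (Perm α)) : Prop :=
  ∀ z : Perm α, (∀ a b, ∃ g ∈ G, z a = g a ∧ z b = g b) → z ∈ G

/-- The group of permutations preserving a function of two points, that is, the automorphism group
of the complete directed graph with loops whose edges are coloured by `f`. -/
def pairStabilizer (f : α → α → β) : Subgroup (Perm α) where
  carrier := {g | ∀ a b, f (g a) (g b) = f a b}
  mul_mem' hg hh a b := (hg _ _).trans (hh a b)
  one_mem' _ _ := rfl
  inv_mem' {g} hg a b := by simpa using (hg (g⁻¹ a) (g⁻¹ b)).symm

theorem isTwoClosed_pairStabilizer (f : α → α → β) : IsTwoClosed (pairStabilizer f) := by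
  intro z hz a b
  obtain ⟨g, hg, ha, hb⟩ := hz a b
  rw [ha, hb, hg a b]

theorem eq_of_le_of_stabilizer_inf_le {Γ : Type*} [Group Γ] [MulAction Γ α] {G H : Subgroup Γ}
    [MulAction.IsPretransitive G α] (hGH : G ≤ H) (a : α)
    (hstab : MulAction.stabilizer Γ a ⊓ H ≤ G) : G = H := by
  refine hGH.antisymm fun z hz => ?_
  obtain ⟨⟨g, hg⟩, hgz : g • z • a = a⟩ := MulAction.exists_smul_eq G (z • a) a
  have hgz_mem : g * z ∈ G := hstab ⟨(mul_smul g z a).trans hgz, mul_mem (hGH hg) hz⟩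
  exact (Subgroup.mul_mem_cancel_left _ hg).1 hgz_mem

/-- The action of `Perm α` on the first factor of `α × β`. -/
def onFst (α β : Type*) : Perm α →* Perm (α × β) :=
  MonoidHom.mk' (fun s => s.prodCongr (Equiv.refl β)) fun _ _ => rfl

@[simp]
theorem onFst_apply (s : Perm α) (x : α × β) : onFst α β s x = (s x.1, x.2) := rfl

end TwoClosed

theorem even_sub_iff_zmod_eight : ∀ i j : ZMod 8, Even (j - i) ↔ (Even i ↔ Even j) := by
  decide

theorem even_iff_even_of_two_mul_eq : ∀ {i j : ZMod 8}, 2 * i = 2 * j → (Even i ↔ Even j) := by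
  decide

theorem sigma1_zpow_apply (n : ℤ) (i : ZMod 8) : (sigma1 ^ n) i = i + n := by
  simp [sigma1]

theorem sigma1_inv_mul_sigma2_apply :
    ∀ i, (sigma1⁻¹ * sigma2) i = if Even i then i else i + 4 := by
  decide

section Twist

variable {A : Type*} [AddCommGroup A]

variable (A) in
/-- The action of `A` on `ZMod 8 × A` by translation of the second coordinate, through `a` over the
even elements of `ZMod 8` and through `-a` over the odd ones. For `A = ZMod k × ZMod r`, the
elements `(1, 0)` and `(0, 1)` act as `ρ₁` and `ρ₂`. -/
def twist : Multiplicative A →* Perm (ZMod 8 × A) :=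
  MonoidHom.mk'
    (fun a => prodCongrRight fun i => Equiv.addRight (if Even i then a.toAdd else -a.toAdd))
    fun a b => by
      ext1 ⟨i, u⟩
      by_cases hi : Even i <;> simp [hi, add_assoc, add_comm b.toAdd, add_comm (-b.toAdd)]

theorem twist_apply (a : Multiplicative A) (x : ZMod 8 × A) :
    twist A a x = (x.1, x.2 + if Even x.1 then a.toAdd else -a.toAdd) := rfl

variable (A) in
/-- The analogue of `G` for an arbitrary abelian group `A` in place of `ZMod k × ZMod r`. -/
def twistGroup : Subgroup (Perm (ZMod 8 × A)) :=
  (Subgroup.closure {sigma1, sigma2}).map (onFst (ZMod 8) A) ⊔ (twist A).range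

theorem onFst_sigma1_mem_twistGroup : onFst (ZMod 8) A sigma1 ∈ twistGroup A :=
  Subgroup.mem_sup_left (Subgroup.mem_map_of_mem _ (Subgroup.subset_closure (by simp)))

theorem onFst_sigma2_mem_twistGroup : onFst (ZMod 8) A sigma2 ∈ twistGroup A :=
  Subgroup.mem_sup_left (Subgroup.mem_map_of_mem _ (Subgroup.subset_closure (by simp)))

theorem twist_mem_twistGroup (a : Multiplicative A) : twist A a ∈ twistGroup A :=
  Subgroup.mem_sup_right ⟨a, rfl⟩

instance isPretransitive_twistGroup :
    MulAction.IsPretransitive (twistGroup A) (ZMod 8 × A) := by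
  refine (MulAction.isPretransitive_iff_base 0).2 fun ⟨i, u⟩ => ?_
  obtain ⟨n, rfl⟩ := ZMod.intCast_surjective i
  refine ⟨⟨onFst _ A sigma1 ^ n * twist A (.ofAdd u),
    mul_mem (zpow_mem onFst_sigma1_mem_twistGroup n) (twist_mem_twistGroup _)⟩, ?_⟩
  change (onFst _ A sigma1 ^ n) (twist A (.ofAdd u) 0) = _
  simp [← map_zpow, sigma1_zpow_apply, twist_apply]

/-- The invariant of an ordered pair of points that cuts out `twistGroup A`. The summands of the
codomain keep pairs of equal and of different parity apart. -/
def pairInvariant (x y : ZMod 8 × A) : (ZMod 8 × A) ⊕ (ZMod 8 × A) :=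
  if Even (y.1 - x.1) then Sum.inl (y - x) else Sum.inr (2 * (y.1 - x.1), y.2 + x.2)

theorem pairInvariant_eq_iff_of_even {x y x' y' : ZMod 8 × A} (h : Even (y.1 - x.1)) :
    pairInvariant x' y' = pairInvariant x y ↔ y' - x' = y - x := by
  constructor
  · intro heq
    by_cases h' : Even (y'.1 - x'.1)
    · simpa [pairInvariant, h, h'] using heq
    · simp [pairInvariant, h, h'] at heq
  · intro heq
    have h' : Even (y'.1 - x'.1) := by rwa [← Prod.fst_sub, heq]
    simp only [pairInvariant, h, h', if_true, heq]

theorem pairInvariant_eq_iff_of_not_even {x y x' y' : ZMod 8 × A} (h : ¬ Even (y.1 - x.1)) :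
    pairInvariant x' y' = pairInvariant x y ↔
      2 * (y'.1 - x'.1) = 2 * (y.1 - x.1) ∧ y'.2 + x'.2 = y.2 + x.2 := by
  constructor
  · intro heq
    by_cases h' : Even (y'.1 - x'.1)
    · simp [pairInvariant, h, h'] at heq
    · simpa [pairInvariant, h, h'] using heq
  · rintro ⟨hfst, hsnd⟩
    have h' : ¬ Even (y'.1 - x'.1) := by rwa [even_iff_even_of_two_mul_eq hfst]
    simp only [pairInvariant, h, h', if_false, hfst, hsnd]

theorem onFst_mem_pairStabilizer {s : Perm (ZMod 8)}
    (heven : ∀ i j, Even (j - i) → s j - s i = j - i)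
    (hodd : ∀ i j, ¬ Even (j - i) → 2 * (s j - s i) = 2 * (j - i)) :
    onFst (ZMod 8) A s ∈ pairStabilizer pairInvariant := by
  intro x y
  by_cases h : Even (y.1 - x.1)
  · exact (pairInvariant_eq_iff_of_even h).2 (Prod.ext (heven _ _ h) rfl)
  · exact (pairInvariant_eq_iff_of_not_even h).2 ⟨hodd _ _ h, rfl⟩

theorem twist_mem_pairStabilizer (a : Multiplicative A) :
    twist A a ∈ pairStabilizer pairInvariant := by
  intro x y
  by_cases h : Even (y.1 - x.1)
  · have hparity := (even_sub_iff_zmod_eight _ _).1 h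
    refine (pairInvariant_eq_iff_of_even h).2 (Prod.ext rfl ?_)
    simp [twist_apply, hparity]
  · refine (pairInvariant_eq_iff_of_not_even h).2 ⟨rfl, ?_⟩
    rw [even_sub_iff_zmod_eight] at h
    by_cases hx : Even x.1 <;> by_cases hy : Even y.1
    · exact absurd (iff_of_true hx hy) h
    · simp [twist_apply, hx, hy, add_assoc]
    · simp [twist_apply, hx, hy, add_assoc]
    · exact absurd (iff_of_false hx hy) h

theorem twistGroup_le_pairStabilizer : twistGroup A ≤ pairStabilizer pairInvariant := by
  rw [twistGroup, sup_le_iff, Subgroup.map_le_iff_le_comap, Subgroup.closure_le]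
  constructor
  · rintro _ (rfl | rfl)
    · exact onFst_mem_pairStabilizer (by decide) (by decide)
    · exact onFst_mem_pairStabilizer (by decide) (by decide)
  · rintro _ ⟨a, rfl⟩
    exact twist_mem_pairStabilizer a

theorem eq_one_or_eq_onFst_of_apply_zero {z : Perm (ZMod 8 × A)}
    (hz : z ∈ pairStabilizer pairInvariant) (h0 : z 0 = 0) :
    z = 1 ∨ z = onFst (ZMod 8) A (sigma1⁻¹ * sigma2) := by
  have apply_even (x : ZMod 8 × A) (hx : Even x.1) : z x = x := by
    simpa [h0] using (pairInvariant_eq_iff_of_even (by simpa using hx)).1 (hz 0 x)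
  have one_odd : ¬ Even (1 : ZMod 8) := by decide
  have even_sub_one : ∀ i : ZMod 8, ¬ Even i → Even (i - 1) := by decide
  have apply_odd (x : ZMod 8 × A) (hx : ¬ Even x.1) : z x = x + (z (1, 0) - (1, 0)) := by
    have h := (pairInvariant_eq_iff_of_even (even_sub_one _ hx)).1 (hz (1, 0) x)
    rw [← sub_add_cancel (z x) (z (1, 0)), h]
    abel
  have apply_one : 2 * (z (1, 0)).1 = 2 * 1 ∧ (z (1, 0)).2 = 0 := by
    simpa [h0] using (pairInvariant_eq_iff_of_not_even (by simpa using one_odd)).1 (hz 0 (1, 0))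
  have displacement : ∀ i : ZMod 8, 2 * i = 2 * 1 → i - 1 = 0 ∨ i - 1 = 4 := by decide
  refine (displacement _ apply_one.1).imp (fun h => ?_) fun h => ?_
  · ext1 x
    by_cases hx : Even x.1
    · exact apply_even x hx
    · rw [apply_odd x hx]
      simp [Prod.ext_iff, h, apply_one.2]
  · ext1 x
    rw [onFst_apply, sigma1_inv_mul_sigma2_apply]
    by_cases hx : Even x.1
    · rw [apply_even x hx, if_pos hx]
    · rw [apply_odd x hx, if_neg hx]
      simp [Prod.ext_iff, h, apply_one.2]

theorem twistGroup_eq_pairStabilizer : twistGroup A = pairStabilizer pairInvariant := by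
  refine eq_of_le_of_stabilizer_inf_le twistGroup_le_pairStabilizer (0 : ZMod 8 × A) ?_
  rintro z ⟨h0, hz⟩
  rcases eq_one_or_eq_onFst_of_apply_zero hz h0 with rfl | rfl
  · exact one_mem _
  · rw [map_mul, map_inv]
    exact mul_mem (inv_mem onFst_sigma1_mem_twistGroup) onFst_sigma2_mem_twistGroup

variable (A) in
theorem Ggrp_twoClosed_general : IsTwoClosed (twistGroup A) := by
  rw [twistGroup_eq_pairStabilizer]
  exact isTwoClosed_pairStabilizer _

end Twist

theorem rho1_eq_twist (k r : ℕ) : rho1 k r = twist (ZMod k × ZMod r) (.ofAdd (1, 0)) := by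
  ext1 ⟨i, u⟩
  by_cases hi : Even i <;> simp [rho1, twist_apply, hi, Prod.ext_iff, sub_eq_add_neg]

theorem rho2_eq_twist (k r : ℕ) : rho2 k r = twist (ZMod k × ZMod r) (.ofAdd (0, 1)) := by
  ext1 ⟨i, u⟩
  by_cases hi : Even i <;> simp [rho2, twist_apply, hi, Prod.ext_iff, sub_eq_add_neg]

theorem range_twist_eq_closure (k r : ℕ) :
    (twist (ZMod k × ZMod r)).range = Subgroup.closure {rho1 k r, rho2 k r} := by
  apply le_antisymm
  · rintro _ ⟨a, rfl⟩
    obtain ⟨m, hm⟩ := ZMod.intCast_surjective a.toAdd.1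
    obtain ⟨n, hn⟩ := ZMod.intCast_surjective a.toAdd.2
    have ha : a = .ofAdd (1, 0) ^ m * .ofAdd (0, 1) ^ n :=
      Multiplicative.toAdd.injective (Prod.ext (by simp [hm]) (by simp [hn]))
    rw [ha, map_mul, map_zpow, map_zpow, ← rho1_eq_twist, ← rho2_eq_twist]
    exact mul_mem (zpow_mem (Subgroup.subset_closure (by simp)) m)
      (zpow_mem (Subgroup.subset_closure (by simp)) n)
  · rw [Subgroup.closure_le]
    rintro _ (rfl | rfl)
    · exact ⟨_, (rho1_eq_twist k r).symm⟩
    · exact ⟨_, (rho2_eq_twist k r).symm⟩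

theorem map_onFst_closure_eq_Hgrp (k r : ℕ) :
    (Subgroup.closure {sigma1, sigma2}).map (onFst (ZMod 8) (ZMod k × ZMod r)) = Hgrp k r := by
  rw [MonoidHom.map_closure, Set.image_pair]
  rfl

theorem Ggrp_eq_twistGroup (k r : ℕ) : Ggrp k r = twistGroup (ZMod k × ZMod r) := by
  rw [twistGroup, map_onFst_closure_eq_Hgrp, range_twist_eq_closure, Ggrp, R1, R2, Hgrp,
    ← Subgroup.closure_union, ← Subgroup.closure_union]
  congr 1
  ext g
  simp only [Set.mem_union, Set.mem_insert_iff, Set.mem_singleton_iff]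
  tauto

/-- `G = ⟨R₁, R₂⟩` is `2`-closed: every permutation of `Ω` agreeing with some element of
`G` on every ordered pair of points belongs to `G`. -/
theorem Ggrp_twoClosed (k r : ℕ) (hk0 : 0 < k) (hk : Odd k) (hr : r = 1 ∨ r = 3) :
    ∀ z : Equiv.Perm (ZMod 8 × ZMod k × ZMod r),
      (∀ a b : ZMod 8 × ZMod k × ZMod r, ∃ g ∈ Ggrp k r, z a = g a ∧ z b = g b) →
      z ∈ Ggrp k r := by
  rw [Ggrp_eq_twistGroup]
  exact Ggrp_twoClosed_general _
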